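/- arXiv:cs/0612064 — 2 statements merged into one kernel-verified Lean document; each statement's English description precedes it below -/
import Mathlib

section
/- (Main theorem, lower bound.) If K_max is nonempty and R = max{P_τ : τ ∈ K_max}, then for every message length L the key appearance equivocation satisfies log(2) · R^L ≤ H(K | M^L C^L). -/
open scoped Classical

noncomputable section

/-- Probability of a word under the i.i.d. extension of the symbol distribution `P`. -/
def wordP {M : Type*} (P : M → ℝ) {L : ℕ} (m : Fin L → M) : ℝ := ∏ l, P (m l)

/-- Number of keys in `K` mapping the message `m` (letterwise) to the cryptogram `c`. -/
def keyCount {M : Type*} (K : Subgroup (Equiv.Perm M)) {L : ℕ} (m c : Fin L → M) : ℕ :=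
  Nat.card {k : Equiv.Perm M // k ∈ K ∧ ∀ l, k (m l) = c l}

/-- The key appearance equivocation `H(K | M^L C^L)` for the substitution cipher with
key space `K` (keys uniform), symbol distribution `P` and message length `L`. -/
def kae {M : Type*} [Fintype M] (K : Subgroup (Equiv.Perm M)) (P : M → ℝ) (L : ℕ) : ℝ :=
  ∑ m : Fin L → M, ∑ c : Fin L → M,
    wordP P m * (keyCount K m c : ℝ) / (Nat.card K : ℝ) * Real.log (keyCount K m c)

/-- The fixed set `F(π)` of a permutation. -/
def fixedSet {M : Type*} [Fintype M] [DecidableEq M] (π : Equiv.Perm M) : Finset M :=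
  Finset.univ.filter fun j => π j = j

/-- `P_π`: total probability of the fixed set of `π`. -/
def Pfix {M : Type*} [Fintype M] [DecidableEq M] (P : M → ℝ) (π : Equiv.Perm M) : ℝ :=
  ∑ j ∈ fixedSet π, P j

/-- A key is maximal if it is a non-identity element of `K` whose fixed set is maximal
under inclusion among fixed sets of non-identity elements of `K`. -/
def IsMaximalKey {M : Type*} [Fintype M] [DecidableEq M] (K : Subgroup (Equiv.Perm M))
    (π : Equiv.Perm M) : Prop :=
  π ∈ K ∧ π ≠ 1 ∧ ∀ τ ∈ K, τ ≠ 1 → fixedSet π ⊆ fixedSet τ → fixedSet τ = fixedSet π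

/-- The stabilizer of the message `m` in `K` is nontrivial. -/
def hasNontrivialStab {M : Type*} (K : Subgroup (Equiv.Perm M)) {L : ℕ} (m : Fin L → M) : Prop :=
  ∃ k ∈ K, k ≠ 1 ∧ ∀ l, k (m l) = m l

/-- Total probability of length-`L` messages with a nontrivial stabilizer in `K`. -/
def probNontrivial {M : Type*} [Fintype M] (K : Subgroup (Equiv.Perm M)) (P : M → ℝ)
    (L : ℕ) : ℝ :=
  ∑ m : Fin L → M, if hasNontrivialStab K m then wordP P m else 0

/-!
If some key carries `m` to `c`, the keys that do so form a coset of the stabilizer of `m` in `K`.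
Hence `H(K | M^L C^L) = ∑ m, P(m) log |Stab m|`, in which every message with a nontrivial stabilizer
contributes at least `P(m) log 2`. The messages spelled with fixed letters of a key `τ ≠ 1` are all
of this kind, and their total probability is `P_τ ^ L`.
-/

theorem wordP_nonneg {M : Type*} {P : M → ℝ} (hP : ∀ x, 0 ≤ P x) {L : ℕ} (m : Fin L → M) :
    0 ≤ wordP P m :=
  Finset.prod_nonneg fun l _ => hP (m l)

section KeyCount

variable {M : Type*} {K : Subgroup (Equiv.Perm M)} {L : ℕ} {m c : Fin L → M}

theorem keyCount_eq_keyCount_self (h : keyCount K m c ≠ 0) : keyCount K m c = keyCount K m m := by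
  obtain ⟨k, hk, hkc⟩ := (Nat.card_ne_zero.1 h).1
  refine Nat.card_congr ((Equiv.mulLeft k⁻¹).subtypeEquiv fun g => ?_)
  have hgK : g ∈ K ↔ k⁻¹ * g ∈ K := (K.mul_mem_cancel_left (K.inv_mem hk)).symm
  simp only [Equiv.coe_mulLeft, ← hgK, Equiv.Perm.mul_apply, Equiv.Perm.inv_eq_iff_eq, hkc]

theorem two_le_keyCount_self [Finite M] (h : hasNontrivialStab K m) : 2 ≤ keyCount K m m := by
  obtain ⟨τ, hτK, hτ, hτm⟩ := h
  have : Nontrivial {k : Equiv.Perm M // k ∈ K ∧ ∀ l, k (m l) = m l} :=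
    ⟨⟨τ, hτK, hτm⟩, ⟨1, K.one_mem, fun _ => rfl⟩, fun heq => hτ (congrArg Subtype.val heq)⟩
  exact Finite.one_lt_card

variable (K m) in
theorem sum_keyCount [Fintype M] : ∑ c, keyCount K m c = Nat.card K := by
  let fibers : (Σ c : Fin L → M, {k : Equiv.Perm M // k ∈ K ∧ ∀ l, k (m l) = c l}) ≃ K :=
    { toFun := fun x => ⟨x.2.1, x.2.2.1⟩
      invFun := fun k => ⟨fun l => k.1 (m l), k.1, k.2, fun _ => rfl⟩
      left_inv := by
        rintro ⟨c, k, hk, hkc⟩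
        obtain rfl : (fun l => k (m l)) = c := funext hkc
        rfl
      right_inv := fun _ => rfl }
  exact Nat.card_sigma.symm.trans (Nat.card_congr fibers)

end KeyCount

section Equivocation

variable {M : Type*} [Fintype M] (K : Subgroup (Equiv.Perm M)) {P : M → ℝ}

theorem kae_eq_sum_wordP_mul_log_keyCount_self (P : M → ℝ) (L : ℕ) :
    kae K P L = ∑ m : Fin L → M, wordP P m * Real.log (keyCount K m m) := by
  refine Finset.sum_congr rfl fun m _ => ?_
  have log_eq (c : Fin L → M) : (keyCount K m c : ℝ) * Real.log (keyCount K m c) =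
      keyCount K m c * Real.log (keyCount K m m) := by
    by_cases h : keyCount K m c = 0
    · simp only [h, Nat.cast_zero, zero_mul]
    · rw [keyCount_eq_keyCount_self h]
  have card_ne_zero : (Nat.card K : ℝ) ≠ 0 := Nat.cast_ne_zero.2 Nat.card_pos.ne'
  calc ∑ c, wordP P m * keyCount K m c / Nat.card K * Real.log (keyCount K m c)
      = ∑ c, (keyCount K m c : ℝ) * (wordP P m / Nat.card K * Real.log (keyCount K m m)) := by
        refine Finset.sum_congr rfl fun c _ => ?_
        linear_combination wordP P m / Nat.card K * log_eq c
    _ = Nat.card K * (wordP P m / Nat.card K * Real.log (keyCount K m m)) := by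
        rw [← Finset.sum_mul, ← Nat.cast_sum, sum_keyCount]
    _ = wordP P m * Real.log (keyCount K m m) := by
        rw [← mul_assoc, mul_div_cancel₀ _ card_ne_zero]

theorem log_two_mul_probNontrivial_le_kae (hP : ∀ x, 0 ≤ P x) (L : ℕ) :
    Real.log 2 * probNontrivial K P L ≤ kae K P L := by
  rw [kae_eq_sum_wordP_mul_log_keyCount_self, probNontrivial, Finset.mul_sum]
  refine Finset.sum_le_sum fun m _ => ?_
  split_ifs with h
  · rw [mul_comm]
    have two_le : (2 : ℝ) ≤ keyCount K m m := mod_cast two_le_keyCount_self h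
    exact mul_le_mul_of_nonneg_left (Real.log_le_log two_pos two_le) (wordP_nonneg hP m)
  · rw [mul_zero]
    exact mul_nonneg (wordP_nonneg hP m) (Real.log_natCast_nonneg _)

end Equivocation

section FixedLetters

variable {M : Type*} [Fintype M] [DecidableEq M] {K : Subgroup (Equiv.Perm M)} {P : M → ℝ}
  {τ : Equiv.Perm M}

theorem Pfix_pow_eq_sum_wordP (P : M → ℝ) (τ : Equiv.Perm M) (L : ℕ) :
    Pfix P τ ^ L = ∑ m ∈ Fintype.piFinset fun _ : Fin L => fixedSet τ, wordP P m :=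
  Finset.sum_pow' (fixedSet τ) P L

theorem Pfix_pow_le_probNontrivial (hP : ∀ x, 0 ≤ P x) (hτK : τ ∈ K) (hτ : τ ≠ 1) (L : ℕ) :
    Pfix P τ ^ L ≤ probNontrivial K P L := by
  rw [Pfix_pow_eq_sum_wordP, probNontrivial, ← Finset.sum_filter]
  refine Finset.sum_le_sum_of_subset_of_nonneg (fun m hm => ?_) fun m _ _ => wordP_nonneg hP m
  have fixes_letters (l : Fin L) : τ (m l) = m l :=
    (Finset.mem_filter.1 (Fintype.mem_piFinset.1 hm l)).2
  exact Finset.mem_filter.2 ⟨Finset.mem_univ m, τ, hτK, hτ, fixes_letters⟩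

theorem kae_lower_bound_general (hP : ∀ x, 0 ≤ P x) (hτK : τ ∈ K) (hτ : τ ≠ 1) (L : ℕ) :
    Real.log 2 * Pfix P τ ^ L ≤ kae K P L :=
  calc Real.log 2 * Pfix P τ ^ L
      ≤ Real.log 2 * probNontrivial K P L :=
        mul_le_mul_of_nonneg_left (Pfix_pow_le_probNontrivial hP hτK hτ L)
          (Real.log_nonneg one_le_two)
    _ ≤ kae K P L := log_two_mul_probNontrivial_le_kae K hP L

end FixedLetters

/-- Main theorem, lower bound: `log 2 · R^L ≤ H(K | M^L C^L)`. -/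
theorem kae_lower_bound {M : Type*} [Fintype M] [DecidableEq M]
    (K : Subgroup (Equiv.Perm M)) (P : M → ℝ)
    (hP : ∀ x, 0 ≤ P x) (hsum : ∑ x, P x = 1) (L : ℕ) (R : ℝ)
    (hmax : ∀ τ, IsMaximalKey K τ → Pfix P τ ≤ R)
    (hex : ∃ τ, IsMaximalKey K τ ∧ Pfix P τ = R) :
    Real.log 2 * R ^ L ≤ kae K P L := by
  obtain ⟨τ, ⟨hτK, hτ, -⟩, rfl⟩ := hex
  exact kae_lower_bound_general hP hτK hτ L
end
end

section
/- Let F be a finite field with |F| = N ≥ 3, and let K ≤ Sym(F) be the group of affine permutations x ↦ a·x + b with a ≠ 0. Then the maximal keys of K are exactly the affine maps with a ∉ {0, 1}; consequently |K| = N(N−1) and |K_max| = N(N−2). Moreover, for any probability distribution P_M on F, R = max{P_π : π ∈ K_max} = max{P_M(n) : n ∈ F}, where P_π = Σ_{j ∈ F(π)} P_M(j). -/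
open scoped Classical

noncomputable section

/-!
Only `b = 0` lets a translation `x ↦ x + b` fix a point, while `x ↦ a * x + b` with `a ≠ 1` fixes
exactly `b / (1 - a)`. So a non-identity affine map has at most one fixed point, which makes the
maximal keys the non-identity maps that have one, as soon as there is such a map, and `P_π` is the
probability of that point. Every point `n` arises, as the fixed point of `x ↦ a * x + (1 - a) * n`
for any `a ∉ {0, 1}`.
-/

section MaximalKeys

variable {M : Type*} [Fintype M] [DecidableEq M] {K : Subgroup (Equiv.Perm M)}
  {π : Equiv.Perm M} {j : M}

theorem mem_fixedSet : j ∈ fixedSet π ↔ π j = j := by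
  simp [fixedSet]

theorem Pfix_eq_of_mem_fixedSet (P : M → ℝ) (hπ : (fixedSet π : Set M).Subsingleton)
    (hj : j ∈ fixedSet π) : Pfix P π = P j := by
  have fixedSet_eq : fixedSet π = {j} :=
    Finset.eq_singleton_iff_unique_mem.2 ⟨hj, fun _ hi => hπ hi hj⟩
  rw [Pfix, fixedSet_eq, Finset.sum_singleton]

theorem IsMaximalKey.fixedSet_nonempty (hπ : IsMaximalKey K π)
    (hfix : ∃ τ ∈ K, τ ≠ 1 ∧ (fixedSet τ).Nonempty) : (fixedSet π).Nonempty := by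
  obtain ⟨τ, hτ, hτ_ne, hτ_fix⟩ := hfix
  by_contra hempty
  rw [Finset.not_nonempty_iff_eq_empty] at hempty
  have fixedSet_eq : fixedSet τ = fixedSet π := hπ.2.2 τ hτ hτ_ne (by simp [hempty])
  exact hτ_fix.ne_empty (fixedSet_eq.trans hempty)

theorem isMaximalKey_of_mem_fixedSet
    (hK : ∀ τ ∈ K, τ ≠ 1 → (fixedSet τ : Set M).Subsingleton)
    (hπ : π ∈ K) (hπ_ne : π ≠ 1) (hj : j ∈ fixedSet π) : IsMaximalKey K π := by
  refine ⟨hπ, hπ_ne, fun τ hτ hτ_ne hsub => Finset.Subset.antisymm (fun i hi => ?_) hsub⟩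
  have i_eq_j : i = j := hK τ hτ hτ_ne hi (hsub hj)
  exact i_eq_j ▸ hj

theorem setOf_Pfix_isMaximalKey_eq_range
    (hK : ∀ τ ∈ K, τ ≠ 1 → (fixedSet τ : Set M).Subsingleton)
    (hfix : ∀ j, ∃ τ ∈ K, τ ≠ 1 ∧ j ∈ fixedSet τ) (P : M → ℝ) :
    {x | ∃ π, IsMaximalKey K π ∧ Pfix P π = x} = Set.range P := by
  ext x
  constructor
  · rintro ⟨π, hπ, rfl⟩
    obtain ⟨i, -⟩ := DFunLike.ne_iff.1 hπ.2.1
    obtain ⟨τ, hτ, hτ_ne, hi⟩ := hfix i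
    obtain ⟨j, hj⟩ := hπ.fixedSet_nonempty ⟨τ, hτ, hτ_ne, i, hi⟩
    exact ⟨j, (Pfix_eq_of_mem_fixedSet P (hK π hπ.1 hπ.2.1) hj).symm⟩
  · rintro ⟨j, rfl⟩
    obtain ⟨τ, hτ, hτ_ne, hj⟩ := hfix j
    exact ⟨τ, isMaximalKey_of_mem_fixedSet hK hτ hτ_ne hj,
      Pfix_eq_of_mem_fixedSet P (hK τ hτ hτ_ne) hj⟩

end MaximalKeys

section Ring

variable {R : Type*} [Ring R]

/-- The affine permutation `x ↦ a * x + b` of a ring, with the unit `a` as its linear part. -/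
def affinePerm (a : Rˣ) (b : R) : Equiv.Perm R :=
  a.mulLeft.trans (Equiv.addRight b)

theorem affinePerm_apply (a : Rˣ) (b x : R) : affinePerm a b x = a * x + b :=
  rfl

theorem affinePerm_one_zero : affinePerm (1 : Rˣ) 0 = 1 := by
  ext x
  simp [affinePerm_apply]

theorem affinePerm_mul_affinePerm (a c : Rˣ) (b d : R) :
    affinePerm a b * affinePerm c d = affinePerm (a * c) (a * d + b) := by
  ext x
  simp [affinePerm_apply, mul_add, mul_assoc, add_assoc]

theorem inv_affinePerm (a : Rˣ) (b : R) :
    (affinePerm a b)⁻¹ = affinePerm a⁻¹ (-(↑a⁻¹ * b)) := by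
  rw [inv_eq_iff_mul_eq_one, affinePerm_mul_affinePerm]
  simp [affinePerm_one_zero]

theorem affinePerm_inj {a c : Rˣ} {b d : R} :
    affinePerm a b = affinePerm c d ↔ a = c ∧ b = d := by
  refine ⟨fun h => ?_, fun ⟨hac, hbd⟩ => by rw [hac, hbd]⟩
  have constant_eq : b = d := by simpa [affinePerm_apply] using DFunLike.congr_fun h 0
  have linear_eq : (a : R) = c := by
    simpa [affinePerm_apply, constant_eq] using DFunLike.congr_fun h 1
  exact ⟨Units.ext linear_eq, constant_eq⟩

theorem affinePerm_eq_one_iff {a : Rˣ} {b : R} : affinePerm a b = 1 ↔ a = 1 ∧ b = 0 := by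
  rw [← affinePerm_one_zero, affinePerm_inj]

theorem affinePerm_one_apply_eq_self_iff {b x : R} : affinePerm 1 b x = x ↔ b = 0 := by
  simp [affinePerm_apply]

theorem card_affinePerm (S : Set Rˣ) :
    Nat.card {σ : Equiv.Perm R // ∃ a ∈ S, ∃ b, affinePerm a b = σ} =
      Nat.card S * Nat.card R := by
  let toAffine (q : S × R) : {σ : Equiv.Perm R // ∃ a ∈ S, ∃ b, affinePerm a b = σ} :=
    ⟨affinePerm q.1 q.2, q.1, q.1.2, q.2, rfl⟩
  have toAffine_bijective : Function.Bijective toAffine := by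
    constructor
    · rintro ⟨a, b⟩ ⟨c, d⟩ h
      obtain ⟨hac, hbd⟩ := affinePerm_inj.1 (congrArg Subtype.val h)
      exact Prod.ext (Subtype.ext hac) hbd
    · rintro ⟨_, a, ha, b, rfl⟩
      exact ⟨(⟨a, ha⟩, b), rfl⟩
  rw [← Nat.card_eq_of_bijective toAffine toAffine_bijective, Nat.card_prod]

variable (R) in
/-- The group of affine permutations `x ↦ a * x + b` of a ring, with `a` a unit. -/
def affineGroup : Subgroup (Equiv.Perm R) where
  carrier := {σ | ∃ a b, affinePerm a b = σ}
  one_mem' := ⟨1, 0, affinePerm_one_zero⟩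
  mul_mem' := by
    rintro _ _ ⟨a, b, rfl⟩ ⟨c, d, rfl⟩
    exact ⟨_, _, (affinePerm_mul_affinePerm a c b d).symm⟩
  inv_mem' := by
    rintro _ ⟨a, b, rfl⟩
    exact ⟨_, _, (inv_affinePerm a b).symm⟩

theorem mem_affineGroup {σ : Equiv.Perm R} :
    σ ∈ affineGroup R ↔ ∃ a b, affinePerm a b = σ :=
  Iff.rfl

theorem affinePerm_mem_affineGroup (a : Rˣ) (b : R) : affinePerm a b ∈ affineGroup R :=
  ⟨a, b, rfl⟩

theorem card_affineGroup : Nat.card (affineGroup R) = Nat.card Rˣ * Nat.card R := by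
  simpa [mem_affineGroup] using card_affinePerm (Set.univ : Set Rˣ)

end Ring

section Field

variable {F : Type*} [Field F]

theorem exists_affinePerm_eq_iff (p : F → Prop) (σ : Equiv.Perm F) :
    (∃ a : Fˣ, p a ∧ ∃ b, affinePerm a b = σ) ↔
      ∃ a b : F, a ≠ 0 ∧ p a ∧ ∀ x, σ x = a * x + b := by
  constructor
  · rintro ⟨a, ha, b, rfl⟩
    exact ⟨a, b, a.ne_zero, ha, affinePerm_apply a b⟩
  · rintro ⟨a, b, ha_ne, ha, hσ⟩
    exact ⟨Units.mk0 a ha_ne, ha, b, Equiv.ext fun x => (hσ x).symm⟩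

theorem mem_affineGroup_iff_forall_apply {σ : Equiv.Perm F} :
    σ ∈ affineGroup F ↔ ∃ a b : F, a ≠ 0 ∧ ∀ x, σ x = a * x + b := by
  simpa [mem_affineGroup] using exists_affinePerm_eq_iff (fun _ => True) σ

theorem affinePerm_apply_eq_self_iff {a : Fˣ} (ha : a ≠ 1) {b x : F} :
    affinePerm a b x = x ↔ x = b / (1 - a) := by
  have one_sub_ne_zero : (1 - a : F) ≠ 0 := sub_ne_zero.2 fun h => ha (Units.ext h.symm)
  rw [affinePerm_apply, eq_div_iff one_sub_ne_zero]
  constructor <;> intro h <;> linear_combination -h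

variable [Fintype F] [DecidableEq F]

theorem fixedSet_subsingleton_of_mem_affineGroup {τ : Equiv.Perm F} (hτ : τ ∈ affineGroup F)
    (hτ_ne : τ ≠ 1) : (fixedSet τ : Set F).Subsingleton := by
  obtain ⟨a, b, rfl⟩ := hτ
  intro x hx y hy
  rw [Finset.mem_coe, mem_fixedSet] at hx hy
  by_cases ha : a = 1
  · subst ha
    exact absurd (affinePerm_eq_one_iff.2 ⟨rfl, affinePerm_one_apply_eq_self_iff.1 hx⟩) hτ_ne
  · rw [affinePerm_apply_eq_self_iff ha] at hx hy
    exact hx.trans hy.symm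

theorem exists_mem_affineGroup_mem_fixedSet [Nontrivial Fˣ] (n : F) :
    ∃ τ ∈ affineGroup F, τ ≠ 1 ∧ n ∈ fixedSet τ := by
  obtain ⟨a, ha⟩ := exists_ne (1 : Fˣ)
  refine ⟨affinePerm a ((1 - a) * n), affinePerm_mem_affineGroup _ _,
    fun h => ha (affinePerm_eq_one_iff.1 h).1, mem_fixedSet.2 ?_⟩
  rw [affinePerm_apply]
  ring

theorem isMaximalKey_affineGroup_iff [Nontrivial Fˣ] {σ : Equiv.Perm F} :
    IsMaximalKey (affineGroup F) σ ↔ ∃ a : Fˣ, a ≠ 1 ∧ ∃ b, affinePerm a b = σ := by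
  constructor
  · intro hσ
    obtain ⟨τ, hτ, hτ_ne, h0⟩ := exists_mem_affineGroup_mem_fixedSet (0 : F)
    obtain ⟨x, hx⟩ := hσ.fixedSet_nonempty ⟨τ, hτ, hτ_ne, 0, h0⟩
    obtain ⟨⟨a, b, rfl⟩, hσ_ne, -⟩ := hσ
    refine ⟨a, ?_, b, rfl⟩
    rintro rfl
    have b_eq_zero : b = 0 := affinePerm_one_apply_eq_self_iff.1 (mem_fixedSet.1 hx)
    exact hσ_ne (affinePerm_eq_one_iff.2 ⟨rfl, b_eq_zero⟩)
  · rintro ⟨a, ha, b, rfl⟩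
    exact isMaximalKey_of_mem_fixedSet (fun _ => fixedSet_subsingleton_of_mem_affineGroup)
      (affinePerm_mem_affineGroup a b) (fun h => ha (affinePerm_eq_one_iff.1 h).1)
      (mem_fixedSet.2 ((affinePerm_apply_eq_self_iff ha).2 rfl))

theorem card_isMaximalKey_affineGroup [Nontrivial Fˣ] :
    Nat.card {σ : Equiv.Perm F // IsMaximalKey (affineGroup F) σ} =
      (Nat.card Fˣ - 1) * Nat.card F := by
  have card_ne_one : Nat.card ({1}ᶜ : Set Fˣ) = Nat.card Fˣ - 1 := by
    rw [Nat.card_coe_set_eq, Set.ncard_compl, Set.ncard_singleton]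
  rw [Nat.card_congr (Equiv.subtypeEquivRight fun _ => isMaximalKey_affineGroup_iff),
    ← card_ne_one]
  exact card_affinePerm {1}ᶜ

end Field

theorem maximal_keys_of_affine_group_general {F : Type*} [Field F] [Fintype F] [DecidableEq F]
    (hN : 3 ≤ Fintype.card F) (K : Subgroup (Equiv.Perm F))
    (hK : ∀ σ : Equiv.Perm F, σ ∈ K ↔ ∃ a b : F, a ≠ 0 ∧ ∀ x, σ x = a * x + b)
    (P : F → ℝ) :
    (∀ σ : Equiv.Perm F, IsMaximalKey K σ ↔
        ∃ a b : F, a ≠ 0 ∧ a ≠ 1 ∧ ∀ x, σ x = a * x + b) ∧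
    Nat.card K = Fintype.card F * (Fintype.card F - 1) ∧
    Nat.card {σ : Equiv.Perm F // IsMaximalKey K σ} =
      Fintype.card F * (Fintype.card F - 2) ∧
    {x : ℝ | ∃ π : Equiv.Perm F, IsMaximalKey K π ∧ Pfix P π = x} = Set.range P := by
  obtain rfl : K = affineGroup F :=
    Subgroup.ext fun σ => (hK σ).trans mem_affineGroup_iff_forall_apply.symm
  have card_units : Nat.card Fˣ = Fintype.card F - 1 := by
    rw [Nat.card_units, Nat.card_eq_fintype_card]
  have : Nontrivial Fˣ := Finite.one_lt_card_iff_nontrivial.1 (by omega)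
  refine ⟨fun σ => ?_, ?_, ?_, ?_⟩
  · rw [isMaximalKey_affineGroup_iff, ← exists_affinePerm_eq_iff (· ≠ 1)]
    simp only [ne_eq, Units.val_eq_one]
  · rw [card_affineGroup, card_units, Nat.card_eq_fintype_card, mul_comm]
  · rw [card_isMaximalKey_affineGroup, card_units, Nat.card_eq_fintype_card, mul_comm,
      Nat.sub_sub]
  · exact setOf_Pfix_isMaximalKey_eq_range (fun _ => fixedSet_subsingleton_of_mem_affineGroup)
      exists_mem_affineGroup_mem_fixedSet P

/-- For the affine group `K = {x ↦ a·x + b : a ≠ 0}` over a finite field `F`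
with `|F| = N ≥ 3`: the maximal keys are exactly the affine maps with `a ∉ {0,1}`,
`|K| = N(N-1)`, `|K_max| = N(N-2)`, and `max{P_π : π ∈ K_max} = max{P_M(n) : n ∈ F}`. -/
theorem maximal_keys_of_affine_group {F : Type*} [Field F] [Fintype F] [DecidableEq F]
    (hN : 3 ≤ Fintype.card F) (K : Subgroup (Equiv.Perm F))
    (hK : ∀ σ : Equiv.Perm F, σ ∈ K ↔ ∃ a b : F, a ≠ 0 ∧ ∀ x, σ x = a * x + b)
    (P : F → ℝ) (hP : ∀ x, 0 ≤ P x) (hsum : ∑ x, P x = 1) :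
    (∀ σ : Equiv.Perm F, IsMaximalKey K σ ↔
        ∃ a b : F, a ≠ 0 ∧ a ≠ 1 ∧ ∀ x, σ x = a * x + b) ∧
    Nat.card K = Fintype.card F * (Fintype.card F - 1) ∧
    Nat.card {σ : Equiv.Perm F // IsMaximalKey K σ} =
      Fintype.card F * (Fintype.card F - 2) ∧
    ∀ r : ℝ, IsGreatest {x : ℝ | ∃ n : F, P n = x} r →
      IsGreatest {x : ℝ | ∃ π : Equiv.Perm F, IsMaximalKey K π ∧ Pfix P π = x} r := by
  have ⟨hmax, hcard, hcard_max, hvalues⟩ := maximal_keys_of_affine_group_general hN K hK P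
  exact ⟨hmax, hcard, hcard_max, fun _ hr => hvalues ▸ hr⟩
end
end
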